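/- Let A and B be bounded self-adjoint operators on a complex Hilbert space H and let m ≥ 1. Define the operator-valued function G_m(s) = s^{2m−1} ∫_{‖ω‖≤1, ω∈ℝ^{2m}} cos(sω₁A/√m)·cos(sω₂B/√m)·cos(sω₃A/√m)⋯cos(sω_{2m−1}A/√m)·cos(sω_{2m}B/√m) · (1−‖ω‖²)^{−1/2} dω, and F_m(t) = (1/(2π)^m) · (D^{m−1}G_m)′(t). Then for every t > 0, F_m(t) = Σ_{n=0}^{∞} ((−1)^n t^{2n} / ((2n)! · m^n)) · Σ_{α∈ℕ^{2m}, |α|=n} (n!/α!) · A^{2α₁} B^{2α₂} A^{2α₃} ⋯ A^{2α_{2m−1}} B^{2α_{2m}}, the outer series converging absolutely in operator norm. -/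

import Mathlib

open MeasureTheory Real

/-- The operator `(Df)(t) = f'(t)/t` for functions with values in a real normed space. -/
noncomputable def Dop {F : Type*} [NormedAddCommGroup F] [NormedSpace ℝ F]
    (f : ℝ → F) : ℝ → F := fun t => t⁻¹ • deriv f t

/-- `cos (s • T)` defined by its norm-convergent power series
`∑ (-1)^k s^(2k) T^(2k) / (2k)!`. -/
noncomputable def cosOp {H : Type*} [NormedAddCommGroup H] [InnerProductSpace ℂ H]
    (s : ℝ) (T : H →L[ℂ] H) : H →L[ℂ] H :=
  ∑' k : ℕ, (((-1:ℝ)^k * s^(2*k)) / (Nat.factorial (2*k) : ℝ)) • T^(2*k)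

open Set Finset in
/-- Integration in polar coordinates of the product of a positively homogeneous function and a
radial function. -/
lemma integral_homogeneous_mul_radial {E : Type*} [NormedAddCommGroup E] [NormedSpace ℝ E]
    [MeasurableSpace E] [BorelSpace E] [Nontrivial E] [FiniteDimensional ℝ E]
    (μ : Measure E) [μ.IsAddHaarMeasure] {f : E → ℝ} {j : ℕ}
    (hf : ∀ r : ℝ, 0 < r → ∀ x, f (r • x) = r ^ j * f x) (h : ℝ → ℝ) :
    ∫ x, f x * h ‖x‖ ∂μ =
      (∫ u : Metric.sphere (0 : E) 1, f u ∂μ.toSphere) *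
        ∫ r in Ioi (0 : ℝ), r ^ (Module.finrank ℝ E - 1 + j) * h r := by
  calc
    ∫ x, f x * h ‖x‖ ∂μ = ∫ x : ({(0)}ᶜ : Set E), f x.1 * h ‖x.1‖ ∂(μ.comap (↑)) := by
      rw [integral_subtype_comap (measurableSet_singleton _).compl fun x ↦ f x * h ‖x‖,
        restrict_compl_singleton]
    _ = ∫ p : Metric.sphere (0 : E) 1 × Ioi (0 : ℝ), f p.1 * (p.2.1 ^ j * h p.2)
          ∂μ.toSphere.prod (.volumeIoiPow (Module.finrank ℝ E - 1)) := by
      rw [← μ.measurePreserving_homeomorphUnitSphereProd.integral_comp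
        (Homeomorph.measurableEmbedding _)]
      refine integral_congr_ae (.of_forall fun x => ?_)
      have hx : 0 < ‖x.1‖ := norm_pos_iff.2 x.2
      have key : f x.1 = ‖x.1‖ ^ j * f (‖x.1‖⁻¹ • x.1) := by
        rw [← hf _ hx, smul_smul, mul_inv_cancel₀ hx.ne', one_smul]
      simp only [homeomorphUnitSphereProd_apply_snd_coe, homeomorphUnitSphereProd_apply_fst_coe]
      rw [key]
      ring
    _ = (∫ u : Metric.sphere (0 : E) 1, f u ∂μ.toSphere) *
          ∫ x : Ioi (0 : ℝ), x.1 ^ j * h x ∂.volumeIoiPow (Module.finrank ℝ E - 1) :=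
      integral_prod_mul (fun u : Metric.sphere (0 : E) 1 => f u)
        (fun x : Ioi (0 : ℝ) => x.1 ^ j * h x)
    _ = _ := by
      congr 1
      simp only [Measure.volumeIoiPow, ENNReal.ofReal]
      rw [integral_withDensity_eq_integral_smul,
        integral_subtype_comap measurableSet_Ioi fun a ↦
          Real.toNNReal (a ^ (Module.finrank ℝ E - 1)) • (a ^ j * h a),
        setIntegral_congr_fun measurableSet_Ioi fun x hx ↦ ?_]
      · rw [NNReal.smul_def, Real.coe_toNNReal _ (pow_nonneg hx.out.le _), smul_eq_mul]
        ring
      · exact (measurable_subtype_coe.pow_const _).real_toNNReal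

lemma Gamma_nat_add_half_eq_factorial (k : ℕ) :
    Gamma (k + 1 / 2) = ((2 * k).factorial : ℝ) / (4 ^ k * k.factorial) * √π := by
  induction k with
  | zero => simpa using Gamma_one_half_eq
  | succ k ih =>
    have h : ((k + 1 : ℕ) : ℝ) + 1 / 2 = (k + 1 / 2) + 1 := by push_cast; ring
    rw [h, Gamma_add_one (by positivity), ih, show 2 * (k + 1) = 2 * k + 1 + 1 by ring,
      Nat.factorial_succ, Nat.factorial_succ, Nat.factorial_succ]
    have := k.factorial_pos
    field_simp
    push_cast
    ring

lemma integral_Ioi_pow_mul_exp_neg_sq (k : ℕ) :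
    ∫ x in Set.Ioi (0 : ℝ), x ^ k * exp (-x ^ 2) = Gamma ((k + 1) / 2) / 2 := by
  have h := integral_rpow_mul_exp_neg_rpow (p := 2) (q := k) (by norm_num)
    (by have : (0 : ℝ) ≤ k := k.cast_nonneg
        linarith)
  rw [div_eq_inv_mul, ← one_div, ← h]
  simp

lemma integral_even_pow_mul_exp_neg_sq (k : ℕ) :
    ∫ x : ℝ, x ^ (2 * k) * exp (-x ^ 2) = Gamma (k + 1 / 2) := by
  have h := integral_comp_abs (f := fun x : ℝ => x ^ (2 * k) * exp (-x ^ 2))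
  simp only [sq_abs, (even_two_mul k).pow_abs] at h
  rw [h, integral_Ioi_pow_mul_exp_neg_sq]
  push_cast
  rw [mul_div_cancel₀ _ two_ne_zero]
  ring_nf

lemma integral_pow_mul_one_sub_rpow_neg_half (N : ℕ) :
    ∫ x in (0 : ℝ)..1, x ^ N * (1 - x) ^ (-(1 : ℝ) / 2) =
      Gamma (N + 1) * √π / Gamma (N + 1 + 1 / 2) := by
  have h := ProbabilityTheory.beta_eq_betaIntegralReal (N + 1) (1 / 2) (by positivity)
    (by norm_num)
  rw [ProbabilityTheory.beta, Gamma_one_half_eq] at h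
  rw [h, Complex.betaIntegral]
  have : (∫ x in (0 : ℝ)..1, (x : ℂ) ^ ((((N : ℝ) + 1 : ℝ) : ℂ) - 1) *
      (1 - (x : ℂ)) ^ ((((1 / 2 : ℝ)) : ℂ) - 1)) =
      ∫ x in (0 : ℝ)..1, ((x ^ N * (1 - x) ^ (-(1 : ℝ) / 2) : ℝ) : ℂ) := by
    refine intervalIntegral.integral_congr fun x hx => ?_
    rw [Set.uIcc_of_le zero_le_one] at hx
    have e : ((1 / 2 : ℝ) : ℂ) - 1 = ((-(1 : ℝ) / 2 : ℝ) : ℂ) := by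
      push_cast; ring
    simp only [e]
    rw [Complex.ofReal_mul, Complex.ofReal_cpow (by linarith [hx.2])]
    simp
  rw [this, intervalIntegral.integral_ofReal, Complex.ofReal_re]

open Set in
lemma integral_Ioi_odd_pow_mul_indicator (N : ℕ) :
    ∫ r in Ioi (0 : ℝ), r ^ (2 * N + 1) *
        (Iic (1 : ℝ)).indicator (fun r => (1 - r ^ 2) ^ (-(1 : ℝ) / 2)) r =
      Gamma (N + 1) * √π / Gamma (N + 1 + 1 / 2) / 2 := by
  have h := integral_comp_rpow_Ioi_of_pos (p := 2)
    (g := (Ioc (0 : ℝ) 1).indicator fun x => x ^ N * (1 - x) ^ (-(1 : ℝ) / 2)) (by norm_num)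
  rw [setIntegral_indicator measurableSet_Ioc, inter_eq_self_of_subset_right Ioc_subset_Ioi_self,
    ← intervalIntegral.integral_of_le zero_le_one, integral_pow_mul_one_sub_rpow_neg_half] at h
  rw [← h, eq_div_iff two_ne_zero, ← integral_mul_const]
  refine setIntegral_congr_fun measurableSet_Ioi fun r (hr : 0 < r) => ?_
  have e : r ^ (2 : ℝ) = r ^ 2 := by norm_cast
  have e' : r ^ ((2 : ℝ) - 1) = r := by norm_num
  by_cases h1 : r ≤ 1
  · have h2 : r ^ 2 ∈ Ioc (0 : ℝ) 1 := ⟨by positivity, by nlinarith⟩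
    simp only [e, e', smul_eq_mul, indicator_of_mem h2, indicator_of_mem (mem_Iic.2 h1)]
    ring
  · have h2 : r ^ 2 ∉ Ioc (0 : ℝ) 1 := fun h => by nlinarith [h.2]
    simp only [e, smul_eq_mul, indicator_of_notMem h2, indicator_of_notMem (mt mem_Iic.1 h1)]
    simp

open Finset in
lemma integral_even_monomial_mul_gaussian {d : ℕ} (α : Fin d → ℕ) :
    ∫ x : EuclideanSpace ℝ (Fin d), (∏ i, x i ^ (2 * α i)) * exp (-‖x‖ ^ 2) =
      ∏ i, Gamma (α i + 1 / 2) := by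
  rw [← (PiLp.volume_preserving_toLp (Fin d)).integral_comp
    (MeasurableEquiv.toLp 2 _).measurableEmbedding]
  simp only [EuclideanSpace.norm_sq_eq, norm_eq_abs, sq_abs, ← sum_neg_distrib, exp_sum,
    ← prod_mul_distrib]
  rw [integral_fintype_prod_volume_eq_prod (fun i (x : ℝ) => x ^ (2 * α i) * exp (-x ^ 2))]
  simp only [integral_even_pow_mul_exp_neg_sq]

open Finset in
lemma integral_closedBall_even_monomial {m : ℕ} (hm : 1 ≤ m) (α : Fin (2 * m) → ℕ) :
    ∫ x in Metric.closedBall (0 : EuclideanSpace ℝ (Fin (2 * m))) 1,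
        (∏ i, x i ^ (2 * α i)) * (1 - ‖x‖ ^ 2) ^ (-(1 : ℝ) / 2) =
      (∏ i, Gamma (α i + 1 / 2)) * √π / Gamma ((∑ i, α i : ℕ) + m + 1 / 2) := by
  obtain ⟨m, rfl⟩ : ∃ k, m = k + 1 := ⟨m - 1, by omega⟩
  have : Nontrivial (EuclideanSpace ℝ (Fin (2 * (m + 1)))) :=
    Module.nontrivial_of_finrank_pos (R := ℝ) (by simp)
  set n := ∑ i, α i
  let f : EuclideanSpace ℝ (Fin (2 * (m + 1))) → ℝ := fun x => ∏ i, x i ^ (2 * α i)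
  have hom : ∀ r : ℝ, 0 < r → ∀ x, f (r • x) = r ^ (2 * n) * f x := fun r _ x => by
    simp only [f]
    simp only [PiLp.smul_apply, smul_eq_mul, mul_pow, prod_mul_distrib, prod_pow_eq_pow_sum,
      ← mul_sum, n]
  have hG := integral_homogeneous_mul_radial volume hom fun r => exp (-r ^ 2)
  have hB := integral_homogeneous_mul_radial volume hom
    ((Set.Iic (1 : ℝ)).indicator fun r => (1 - r ^ 2) ^ (-(1 : ℝ) / 2))
  have e : Module.finrank ℝ (EuclideanSpace ℝ (Fin (2 * (m + 1)))) - 1 + 2 * n =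
      2 * (n + m) + 1 := by
    rw [finrank_euclideanSpace_fin]; omega
  rw [e, integral_Ioi_odd_pow_mul_indicator] at hB
  rw [e, integral_Ioi_pow_mul_exp_neg_sq, show ∫ x, f x * exp (-‖x‖ ^ 2) = _ from integral_even_monomial_mul_gaussian α] at hG
  have e2 : (((2 * (n + m) + 1 : ℕ) : ℝ) + 1) / 2 = ((n + m : ℕ) : ℝ) + 1 := by
    push_cast; ring
  rw [e2] at hG
  have e3 : (n : ℝ) + ((m + 1 : ℕ) : ℝ) + 1 / 2 = ((n + m : ℕ) : ℝ) + 1 + 1 / 2 := by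
    push_cast; ring
  rw [e3, hG, ← integral_indicator Metric.isClosed_closedBall.measurableSet]
  convert hB using 1
  · refine integral_congr_ae (.of_forall fun x => ?_)
    by_cases hx : ‖x‖ ≤ 1
    · simp [hx, f]
    · simp [hx]
  · ring

lemma summable_norm_prod_ofFn {R : Type*} [NormedRing R] [CompleteSpace R] :
    ∀ {d : ℕ} {f : Fin d → ℕ → R}, (∀ i, Summable fun k => ‖f i k‖) →
      (Summable fun α : Fin d → ℕ => ‖(List.ofFn fun i => f i (α i)).prod‖) ∧
        (List.ofFn fun i => ∑' k, f i k).prod =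
          ∑' α : Fin d → ℕ, (List.ofFn fun i => f i (α i)).prod
  | 0, f, _ => by simp [tsum_fintype, Summable.of_finite]
  | d + 1, f, hf => by
    obtain ⟨h1, h2⟩ := summable_norm_prod_ofFn (f := fun i => f i.succ) fun i => hf i.succ
    refine ⟨?_, ?_⟩
    · rw [← (Fin.consEquiv fun _ : Fin (d + 1) => ℕ).summable_iff]
      simpa [Function.comp_def, Fin.consEquiv] using (hf 0).mul_norm h1
    · rw [← (Fin.consEquiv fun _ : Fin (d + 1) => ℕ).tsum_eq, List.ofFn_succ, List.prod_cons, h2,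
        tsum_mul_tsum_of_summable_norm (hf 0) h1]
      simp [Fin.consEquiv]

lemma prod_ofFn_smul {R : Type*} [Semiring R] [Algebra ℝ R] :
    ∀ {d : ℕ} (c : Fin d → ℝ) (x : Fin d → R),
      (List.ofFn fun i => c i • x i).prod = (∏ i, c i) • (List.ofFn x).prod
  | 0, _, _ => by simp
  | d + 1, c, x => by
    rw [List.ofFn_succ, List.prod_cons, prod_ofFn_smul, List.ofFn_succ, List.prod_cons,
      Fin.prod_univ_succ, smul_mul_smul_comm]

lemma summable_pow_mul_linear {v : ℕ → ℝ} (hv : ∀ r : ℝ, 0 ≤ r → Summable fun n => r ^ n * v n)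
    (hv0 : ∀ n, 0 ≤ v n) (p : ℕ) {r : ℝ} (hr : 0 ≤ r) :
    Summable fun n : ℕ => r ^ n * ((2 * n + p) * v n) := by
  refine .of_nonneg_of_le (fun n => ?_) (fun n => ?_)
    ((hv (2 * r) (by positivity)).mul_left (2 + (p : ℝ)))
  · have := hv0 n
    positivity
  · have h : (n : ℝ) ≤ 2 ^ n := by exact_mod_cast n.lt_two_pow_self.le
    have h1 : (1 : ℝ) ≤ 2 ^ n := one_le_pow₀ one_le_two
    have hp : (p : ℝ) ≤ p * 2 ^ n := le_mul_of_one_le_right p.cast_nonneg h1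
    calc r ^ n * ((2 * n + p) * v n) = (2 * n + p) * (r ^ n * v n) := by ring
      _ ≤ ((2 + p) * 2 ^ n) * (r ^ n * v n) := by
        gcongr
        · exact mul_nonneg (pow_nonneg hr n) (hv0 n)
        · linarith
      _ = _ := by rw [mul_pow]; ring

section Series

variable {F : Type*} [NormedAddCommGroup F] [NormedSpace ℝ F] [CompleteSpace F]

lemma hasDerivAt_tsum_pow_smul {v : ℕ → F}
    (hv : ∀ r : ℝ, 0 ≤ r → Summable fun n => r ^ n * ‖v n‖) (p : ℕ) (s : ℝ) :
    HasDerivAt (fun s : ℝ => ∑' n : ℕ, s ^ (2 * n + (p + 1)) • v n)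
      (∑' n : ℕ, s ^ (2 * n + p) • (2 * n + (p + 1 : ℕ) : ℝ) • v n) s := by
  set R := |s| + 1
  have hR : 0 ≤ R := by positivity
  refine hasDerivAt_tsum_of_isPreconnected (t := Metric.ball (0 : ℝ) R) (y₀ := (0 : ℝ)) (y := s)
    (g := fun (n : ℕ) (s : ℝ) => s ^ (2 * n + (p + 1)) • v n)
    (g' := fun n s => s ^ (2 * n + p) • (2 * n + (p + 1 : ℕ) : ℝ) • v n)
    (u := fun n => R ^ p * ((R ^ 2) ^ n * ((2 * n + (p + 1 : ℕ)) * ‖v n‖)))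
    ((summable_pow_mul_linear hv (fun _ => norm_nonneg _) _ (by positivity)).mul_left _)
    Metric.isOpen_ball (convex_ball (0 : ℝ) R).isPreconnected (fun n y _ => ?_) (fun n y hy => ?_)
    (Metric.mem_ball_self (by positivity)) ?_ (by simp [R])
  · convert (hasDerivAt_pow (2 * n + (p + 1)) y).smul_const (v n) using 1
    rw [smul_smul, mul_comm]
    push_cast
    rfl
  · rw [mem_ball_zero_iff, norm_eq_abs] at hy
    rw [norm_smul, norm_smul, norm_pow, norm_eq_abs, norm_of_nonneg (by positivity)]
    calc _ ≤ R ^ (2 * n + p) * ((2 * n + (p + 1 : ℕ)) * ‖v n‖) := by gcongr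
      _ = _ := by rw [pow_add, pow_mul]; ring
  · simp

/-- Iterating `Dop` on an everywhere absolutely convergent odd power series. -/
lemma iterate_Dop_tsum (k : ℕ) {v : ℕ → F}
    (hv : ∀ r : ℝ, 0 ≤ r → Summable fun n => r ^ n * ‖v n‖) {f : ℝ → F}
    (hf : ∀ s : ℝ, 0 < s → f s = ∑' n : ℕ, s ^ (2 * n + (2 * k + 1)) • v n) :
    (∀ r : ℝ, 0 ≤ r → Summable fun n : ℕ =>
        r ^ n * ‖(2 ^ k * Gamma (n + k + 3 / 2) / Gamma (n + 3 / 2)) • v n‖) ∧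
      ∀ s : ℝ, 0 < s → Dop^[k] f s = ∑' n : ℕ, s ^ (2 * n + 1) •
        (2 ^ k * Gamma (n + k + 3 / 2) / Gamma (n + 3 / 2)) • v n := by
  induction k generalizing v f with
  | zero =>
    have h (n : ℕ) : (2 ^ 0 * Gamma (n + (0 : ℕ) + 3 / 2) / Gamma (n + 3 / 2)) = 1 := by
      rw [pow_zero, one_mul, Nat.cast_zero, add_zero,
        div_self (Gamma_pos_of_pos (by positivity)).ne']
    simp only [h, one_smul]
    exact ⟨hv, fun s hs => by simpa using hf s hs⟩
  | succ k ih =>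
    have hw : ∀ r : ℝ, 0 ≤ r → Summable fun n : ℕ =>
        r ^ n * ‖(2 * n + (2 * (k + 1) + 1 : ℕ) : ℝ) • v n‖ := fun r hr => by
      convert summable_pow_mul_linear hv (fun _ => norm_nonneg _) (2 * (k + 1) + 1) hr using 3
      rw [norm_smul, norm_of_nonneg (by positivity)]
    have hD : ∀ s : ℝ, 0 < s → Dop f s = ∑' n : ℕ, s ^ (2 * n + (2 * k + 1)) •
        (2 * n + (2 * (k + 1) + 1 : ℕ) : ℝ) • v n := fun s hs => by
      have hfe : f =ᶠ[nhds s] fun s => ∑' n : ℕ, s ^ (2 * n + (2 * (k + 1) + 1)) • v n :=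
        (lt_mem_nhds hs).mono hf
      rw [Dop, hfe.deriv_eq, (hasDerivAt_tsum_pow_smul hv (2 * (k + 1)) s).deriv,
        ← tsum_const_smul'' s⁻¹]
      congr! 2 with n
      rw [smul_smul]
      congr 1
      rw [show 2 * n + 2 * (k + 1) = (2 * n + (2 * k + 1)) + 1 by ring, pow_succ]
      field_simp
    have h := ih hw hD
    have e (n : ℕ) : (2 ^ k * Gamma (n + k + 3 / 2) / Gamma (n + 3 / 2)) •
        (2 * n + (2 * (k + 1) + 1 : ℕ) : ℝ) • v n =
        (2 ^ (k + 1) * Gamma (n + (k + 1 : ℕ) + 3 / 2) / Gamma (n + 3 / 2)) • v n := by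
      rw [show (n : ℝ) + (k + 1 : ℕ) + 3 / 2 = (n + k + 3 / 2) + 1 by push_cast; ring,
        Gamma_add_one (by positivity), smul_smul]
      congr 1
      push_cast
      ring
    simp only [e] at h
    exact h

end Series

lemma tsum_eq_tsum_sum_antidiagonalTuple {F : Type*} [NormedAddCommGroup F] [CompleteSpace F]
    {k : ℕ} {f : (Fin k → ℕ) → F} (hf : Summable fun α => ‖f α‖) :
    (Summable fun n => ‖∑ α ∈ Finset.Nat.antidiagonalTuple k n, f α‖) ∧
      ∑' α, f α = ∑' n, ∑ α ∈ Finset.Nat.antidiagonalTuple k n, f α := by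
  let e := Finset.Nat.sigmaAntidiagonalTupleEquivTuple k
  have hs : Summable fun p => ‖f (e p)‖ := e.summable_iff.2 hf
  constructor
  · refine .of_nonneg_of_le (fun _ => norm_nonneg _) (fun n => norm_sum_le _ _) ?_
    refine hs.sigma.congr fun n => ?_
    rw [tsum_fintype]
    exact Finset.sum_coe_sort _ fun α => ‖f α‖
  · rw [← e.tsum_eq, hs.of_norm.tsum_sigma]
    refine tsum_congr fun n => ?_
    rw [tsum_fintype]
    exact Finset.sum_coe_sort _ f

lemma integrableOn_closedBall_even_monomial {m : ℕ} (hm : 1 ≤ m) (α : Fin (2 * m) → ℕ) :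
    IntegrableOn (fun x : EuclideanSpace ℝ (Fin (2 * m)) =>
      (∏ i, x i ^ (2 * α i)) * (1 - ‖x‖ ^ 2) ^ (-(1 : ℝ) / 2)) (Metric.closedBall 0 1) := by
  refine .of_integral_ne_zero ?_
  rw [integral_closedBall_even_monomial hm]
  have : 0 < ∏ i, Gamma (α i + 1 / 2) :=
    Finset.prod_pos fun i _ => Gamma_pos_of_pos (by positivity)
  have : 0 < Gamma ((∑ i, α i : ℕ) + m + 1 / 2) := Gamma_pos_of_pos (by positivity)
  positivity

lemma one_sub_norm_sq_rpow_nonneg {E : Type*} [NormedAddCommGroup E] {x : E}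
    (hx : x ∈ Metric.closedBall (0 : E) 1) (p : ℝ) : 0 ≤ (1 - ‖x‖ ^ 2) ^ p := by
  rw [mem_closedBall_zero_iff] at hx
  exact rpow_nonneg (by nlinarith [norm_nonneg x]) _

lemma integral_closedBall_even_monomial_le {m : ℕ} (hm : 1 ≤ m) (α : Fin (2 * m) → ℕ) :
    ∫ x in Metric.closedBall (0 : EuclideanSpace ℝ (Fin (2 * m))) 1,
        (∏ i, x i ^ (2 * α i)) * (1 - ‖x‖ ^ 2) ^ (-(1 : ℝ) / 2) ≤
      ∫ x in Metric.closedBall (0 : EuclideanSpace ℝ (Fin (2 * m))) 1,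
        (1 - ‖x‖ ^ 2) ^ (-(1 : ℝ) / 2) := by
  have h0 := integrableOn_closedBall_even_monomial hm 0
  simp only [Pi.zero_apply, mul_zero, pow_zero, Finset.prod_const_one, one_mul] at h0
  refine setIntegral_mono_on (integrableOn_closedBall_even_monomial hm α) h0
    Metric.isClosed_closedBall.measurableSet fun x hx => ?_
  refine mul_le_of_le_one_left (one_sub_norm_sq_rpow_nonneg hx _)
    (Finset.prod_le_one (fun i _ => (even_two_mul _).pow_nonneg _) fun i _ => ?_)
  rw [mem_closedBall_zero_iff] at hx
  rw [← (even_two_mul (α i)).pow_abs]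
  exact pow_le_one₀ (abs_nonneg _) ((PiLp.norm_apply_le x i).trans hx)

section Algebra

variable {R : Type*} [NormedRing R] [NormedAlgebra ℝ R]

lemma summable_norm_cos_series (s : ℝ) (T : R) :
    Summable fun k : ℕ =>
      ‖(((-1 : ℝ) ^ k * s ^ (2 * k)) / (Nat.factorial (2 * k) : ℝ)) • T ^ (2 * k)‖ := by
  have h := (NormedSpace.norm_expSeries_summable' (𝕂 := ℝ) (s • T)).comp_injective
    (mul_right_injective₀ (two_ne_zero' ℕ))
  refine h.congr fun k => ?_
  simp only [Function.comp_apply, smul_pow, smul_smul, norm_smul, norm_mul, norm_div, norm_pow,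
    norm_neg, norm_one, one_pow, one_mul, norm_inv]
  ring

open Finset in
/-- Term-by-term integration of a product of cosine series against `(1 - ‖ω‖ ^ 2) ^ (-1 / 2)` over
the unit ball of even dimension. -/
lemma integral_closedBall_prod_cos [CompleteSpace R] {m : ℕ} (hm : 1 ≤ m) (T : Fin (2 * m) → R) (s : ℝ) :
    (Summable fun n : ℕ => (s ^ 2) ^ n *
      ‖((-1 : ℝ) ^ n * π ^ m * √π / ((4 * m) ^ n * n.factorial * Gamma (n + m + 1 / 2))) •
        ∑ α ∈ Nat.antidiagonalTuple (2 * m) n,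
          ((n.factorial : ℝ) / ∏ i, ((α i).factorial : ℝ)) •
            (List.ofFn fun i => T i ^ (2 * α i)).prod‖) ∧
    ∫ ω in Metric.closedBall (0 : EuclideanSpace ℝ (Fin (2 * m))) 1,
        ((1 - ‖ω‖ ^ 2) ^ (-(1 : ℝ) / 2)) • (List.ofFn fun i => ∑' k : ℕ,
          (((-1 : ℝ) ^ k * (s * ω i / √m) ^ (2 * k)) / ((2 * k).factorial : ℝ)) •
            T i ^ (2 * k)).prod =
      ∑' n : ℕ, (s ^ 2) ^ n •
        ((-1 : ℝ) ^ n * π ^ m * √π / ((4 * m) ^ n * n.factorial * Gamma (n + m + 1 / 2))) •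
        ∑ α ∈ Nat.antidiagonalTuple (2 * m) n,
          ((n.factorial : ℝ) / ∏ i, ((α i).factorial : ℝ)) •
            (List.ofFn fun i => T i ^ (2 * α i)).prod := by
  have hm0 : (0 : ℝ) < m := by exact_mod_cast hm
  let P : (Fin (2 * m) → ℕ) → R := fun α => (List.ofFn fun i => T i ^ (2 * α i)).prod
  let c : (Fin (2 * m) → ℕ) → ℝ := fun α =>
    ∏ i, (((-1 : ℝ) ^ α i * (s / √m) ^ (2 * α i)) / ((2 * α i).factorial : ℝ))
  let w : (Fin (2 * m) → ℕ) → EuclideanSpace ℝ (Fin (2 * m)) → ℝ := fun α x =>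
    (∏ i, x i ^ (2 * α i)) * (1 - ‖x‖ ^ 2) ^ (-(1 : ℝ) / 2)
  let M : (Fin (2 * m) → ℕ) → ℝ := fun α => ∫ x in Metric.closedBall 0 1, w α x
  have hw (α) (x) (hx : x ∈ Metric.closedBall 0 1) : 0 ≤ w α x :=
    mul_nonneg (prod_nonneg fun i _ => (even_two_mul _).pow_nonneg _)
      (one_sub_norm_sq_rpow_nonneg hx _)
  have hM (α) : 0 ≤ M α :=
    setIntegral_nonneg Metric.isClosed_closedBall.measurableSet (hw α)
  have hcP : Summable fun α => ‖c α • P α‖ := by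
    have h := (summable_norm_prod_ofFn fun i => summable_norm_cos_series (s / √m) (T i)).1
    simpa only [prod_ofFn_smul] using h
  have hMcP : Summable fun α => M α * ‖c α • P α‖ :=
    .of_nonneg_of_le (fun α => mul_nonneg (hM α) (norm_nonneg _))
      (fun α => mul_le_mul_of_nonneg_right (integral_closedBall_even_monomial_le hm α)
        (norm_nonneg _)) (hcP.mul_left _)
  have hterm (α) : M α • c α • P α = (s ^ 2) ^ (∑ i, α i) •
      ((-1 : ℝ) ^ (∑ i, α i) * π ^ m * √π /
        ((4 * m) ^ (∑ i, α i) * (∑ i, α i).factorial * Gamma ((∑ i, α i : ℕ) + m + 1 / 2))) •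
      (((∑ i, α i).factorial : ℝ) / ∏ i, ((α i).factorial : ℝ)) • P α := by
    have h1 : M α = _ := integral_closedBall_even_monomial hm α
    simp only [smul_smul]
    congr 1
    rw [h1]
    simp only [c, Gamma_nat_add_half_eq_factorial, prod_mul_distrib, prod_div_distrib,
      prod_pow_eq_pow_sum, pow_mul, prod_const, card_univ, Fintype.card_fin, div_pow,
      sq_sqrt pi_pos.le, sq_sqrt hm0.le, mul_pow]
    have h2 : 0 < Gamma ((∑ i, α i : ℕ) + m + 1 / 2) := Gamma_pos_of_pos (by positivity)
    have h3 : (∏ i, ((2 * α i).factorial : ℝ)) ≠ 0 :=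
      prod_ne_zero_iff.2 fun i _ => by positivity
    have h4 : (∏ i, ((α i).factorial : ℝ)) ≠ 0 :=
      prod_ne_zero_iff.2 fun i _ => by positivity
    have h5 : ((∑ i, α i).factorial : ℝ) ≠ 0 := by positivity
    field_simp
  have hsum : Summable fun α => ‖M α • c α • P α‖ :=
    hMcP.congr fun α => by rw [norm_smul (M α), norm_of_nonneg (hM α)]
  have hgroup (n : ℕ) : ∑ α ∈ Nat.antidiagonalTuple (2 * m) n, M α • c α • P α =
      (s ^ 2) ^ n •
        ((-1 : ℝ) ^ n * π ^ m * √π / ((4 * m) ^ n * n.factorial * Gamma (n + m + 1 / 2))) •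
        ∑ α ∈ Nat.antidiagonalTuple (2 * m) n,
          ((n.factorial : ℝ) / ∏ i, ((α i).factorial : ℝ)) • P α := by
    simp only [smul_sum]
    refine sum_congr rfl fun α hα => ?_
    rw [Nat.mem_antidiagonalTuple] at hα
    rw [hterm, hα]
  obtain ⟨h1, h2⟩ := tsum_eq_tsum_sum_antidiagonalTuple hsum
  simp only [hgroup] at h1 h2
  refine ⟨h1.congr fun n => ?_, ?_⟩
  · rw [norm_smul, norm_of_nonneg (by positivity)]
  rw [← h2]
  have hint := integral_tsum_of_summable_integral_norm
    (μ := volume.restrict (Metric.closedBall (0 : EuclideanSpace ℝ (Fin (2 * m))) 1))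
    (F := fun α x => w α x • c α • P α)
    (fun α => Integrable.smul_const (integrableOn_closedBall_even_monomial hm α) _) (by
      refine hMcP.congr fun α => ?_
      rw [← integral_mul_const]
      refine setIntegral_congr_fun Metric.isClosed_closedBall.measurableSet fun x hx => ?_
      simp only [norm_smul (w α x), norm_of_nonneg (hw α x hx)])
  simp only [integral_smul_const] at hint
  rw [hint]
  refine integral_congr_ae (.of_forall fun x => ?_)
  simp only
  rw [(summable_norm_prod_ofFn fun i => summable_norm_cos_series (s * x i / √m) (T i)).2,
    ← tsum_const_smul'']
  congr! 2 with α
  rw [prod_ofFn_smul, smul_smul, smul_smul]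
  congr 1
  simp only [w, c, mul_right_comm _ _ (∏ i, _), ← prod_mul_distrib]
  rw [mul_comm]
  congr 1
  refine prod_congr rfl fun i _ => ?_
  rw [mul_div_right_comm s, mul_pow]
  ring

end Algebra

theorem stmt14 {H : Type*} [NormedAddCommGroup H] [InnerProductSpace ℂ H] [CompleteSpace H]
    (A B : H →L[ℂ] H) (hA : IsSelfAdjoint A) (hB : IsSelfAdjoint B)
    (m : ℕ) (hm : 1 ≤ m)
    (G : ℝ → (H →L[ℂ] H))
    (hG : ∀ s : ℝ, G s = s ^ (2*m-1) •
      ∫ ω in Metric.closedBall (0 : EuclideanSpace ℝ (Fin (2*m))) 1,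
        ((1 - ‖ω‖^2) ^ (-(1:ℝ)/2)) •
          (List.ofFn (fun i : Fin (2*m) =>
            cosOp (s * ω i / Real.sqrt m) (if (i : ℕ) % 2 = 0 then A else B))).prod)
    (F : ℝ → (H →L[ℂ] H))
    (hF : ∀ t : ℝ, F t = (1 / (2*π)^m) • deriv (Dop^[m-1] G) t) :
    ∀ t ∈ Set.Ioi (0:ℝ),
      Summable (fun n : ℕ =>
        ‖(((-1:ℝ)^n * t^(2*n)) / ((Nat.factorial (2*n) : ℝ) * m^n)) •
          ∑ α ∈ Finset.Nat.antidiagonalTuple (2*m) n,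
            ((Nat.factorial n : ℝ) / (∏ i, (Nat.factorial (α i) : ℝ))) •
              (List.ofFn (fun i : Fin (2*m) =>
                (if (i : ℕ) % 2 = 0 then A else B) ^ (2 * α i))).prod‖) ∧
      F t = ∑' n : ℕ,
        (((-1:ℝ)^n * t^(2*n)) / ((Nat.factorial (2*n) : ℝ) * m^n)) •
          ∑ α ∈ Finset.Nat.antidiagonalTuple (2*m) n,
            ((Nat.factorial n : ℝ) / (∏ i, (Nat.factorial (α i) : ℝ))) •
              (List.ofFn (fun i : Fin (2*m) =>
                (if (i : ℕ) % 2 = 0 then A else B) ^ (2 * α i))).prod := by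
  intro t ht
  rw [Set.mem_Ioi] at ht
  have key := integral_closedBall_prod_cos hm fun i : Fin (2 * m) =>
    if (i : ℕ) % 2 = 0 then A else B
  set S : ℕ → (H →L[ℂ] H) := fun n => ∑ α ∈ Finset.Nat.antidiagonalTuple (2 * m) n,
    ((Nat.factorial n : ℝ) / (∏ i, (Nat.factorial (α i) : ℝ))) •
      (List.ofFn (fun i : Fin (2 * m) => (if (i : ℕ) % 2 = 0 then A else B) ^ (2 * α i))).prod
  set q : ℕ → ℝ := fun n =>
    (-1 : ℝ) ^ n * π ^ m * √π / ((4 * m) ^ n * n.factorial * Gamma (n + m + 1 / 2)) with hq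
  have hv : ∀ r : ℝ, 0 ≤ r → Summable fun n => r ^ n * ‖q n • S n‖ := fun r hr => by
    simpa only [sq_sqrt hr] using (key √r).1
  have hGs : ∀ s : ℝ, 0 < s →
      G s = ∑' n : ℕ, s ^ (2 * n + (2 * (m - 1) + 1)) • q n • S n := fun s _ => by
    rw [hG]
    simp only [cosOp]
    rw [(key s).2, ← tsum_const_smul'']
    refine tsum_congr fun n => ?_
    rw [smul_smul, ← pow_mul, ← pow_add]
    congr 2
    omega
  obtain ⟨hw, hD⟩ := iterate_Dop_tsum (m - 1) hv hGs
  have hd := hasDerivAt_tsum_pow_smul hw 0 t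
  have hDe : Dop^[m - 1] G =ᶠ[nhds t] _ := (lt_mem_nhds ht).mono hD
  have hcoef (n : ℕ) : (1 / (2 * π) ^ m) • t ^ (2 * n + 0) • (2 * n + (0 + 1 : ℕ) : ℝ) •
      (2 ^ (m - 1) * Gamma (n + (m - 1 : ℕ) + 3 / 2) / Gamma (n + 3 / 2)) • q n • S n =
      (((-1 : ℝ) ^ n * t ^ (2 * n)) / ((Nat.factorial (2 * n) : ℝ) * m ^ n)) • S n := by
    simp only [smul_smul]
    congr 1
    obtain ⟨k, rfl⟩ : ∃ k, m = k + 1 := ⟨m - 1, by omega⟩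
    have h1 : Gamma (n + ((k + 1 : ℕ) : ℝ) + 1 / 2) = Gamma (n + k + 3 / 2) := by
      congr 1; push_cast; ring
    have h2 : Gamma ((n : ℝ) + 3 / 2) = (n + 1 / 2) *
        (((2 * n).factorial : ℝ) / (4 ^ n * n.factorial) * √π) := by
      rw [← Gamma_nat_add_half_eq_factorial, ← Gamma_add_one (by positivity)]
      congr 1; ring
    have h3 : 0 < Gamma ((n : ℝ) + k + 3 / 2) := Gamma_pos_of_pos (by positivity)
    simp only [hq, h1, h2, Nat.add_sub_cancel, mul_pow, add_zero]
    push_cast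
    field_simp
    ring
  constructor
  · refine ((summable_pow_mul_linear hw (fun _ => norm_nonneg _) 1 (sq_nonneg t)).mul_left
      (1 / (2 * π) ^ m)).congr fun n => ?_
    rw [← hcoef, norm_smul (1 / (2 * π) ^ m), norm_smul (t ^ _), norm_smul (2 * (n : ℝ) + _),
      norm_of_nonneg (by positivity), norm_of_nonneg (by positivity),
      norm_of_nonneg (by positivity), add_zero, zero_add, pow_mul]
  · rw [hF, hDe.deriv_eq, hd.deriv, ← tsum_const_smul'']
    exact tsum_congr hcoef
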